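/- Let S be a finite nonempty type, P a row-stochastic matrix on S, β a real number with 0 ≤ β < 1, and C : S → ℝ a reward vector. Then the vector V := (I − β·P)⁻¹ ⬝ C is the unique solution of the linear equation V = C + β·(P ⬝ V), and for every state s one has V s = ∑_{t=0}^∞ β^t · (P^t ⬝ C) s (the expected total discounted reward of the stationary strategy with transition matrix P, started at s). -/

import Mathlib

open Matrix

/-- The `ℓ∞` operator norm of a discounted row-stochastic matrix is less than one. -/
theorem linfty_opNorm_smul_lt_one {S : Type*} [Fintype S] (P : Matrix S S ℝ)
    (hP_nonneg : ∀ s s', 0 ≤ P s s') (hP_row : ∀ s, ∑ s', P s s' = 1)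
    {β : ℝ} (hβ0 : 0 ≤ β) (hβ1 : β < 1) :
    letI := Matrix.linftyOpNormedAddCommGroup (m := S) (n := S) (α := ℝ)
    ‖β • P‖ < 1 := by
  rw [Matrix.linfty_opNorm_def, ← NNReal.coe_one, NNReal.coe_lt_coe,
    Finset.sup_lt_iff (by simp)]
  intro s _
  rw [← NNReal.coe_lt_coe]
  simpa [abs_of_nonneg, hβ0, hP_nonneg, ← Finset.mul_sum, hP_row] using hβ1

theorem isUnit_one_sub_smul_and_hasSum_pow {S : Type*} [Fintype S] [DecidableEq S]
    (P : Matrix S S ℝ) (hP_nonneg : ∀ s s', 0 ≤ P s s') (hP_row : ∀ s, ∑ s', P s s' = 1)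
    {β : ℝ} (hβ0 : 0 ≤ β) (hβ1 : β < 1) :
    IsUnit (1 - β • P) ∧ HasSum (fun t : ℕ => (β • P) ^ t) (1 - β • P)⁻¹ := by
  let := Matrix.linftyOpNormedRing (n := S) (α := ℝ)
  have : @CompleteSpace (Matrix S S ℝ) PseudoMetricSpace.toUniformSpace :=
    inferInstanceAs (CompleteSpace (S → S → ℝ))
  have h : ‖β • P‖ < 1 := linfty_opNorm_smul_lt_one P hP_nonneg hP_row hβ0 hβ1
  refine ⟨isUnit_one_sub_of_norm_lt_one h, ?_⟩
  rw [Matrix.nonsing_inv_eq_ringInverse, ← geom_series_eq_inverse _ h]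
  exact (summable_geometric_of_norm_lt_one h).hasSum

theorem stmt1 {S : Type*} [Fintype S] [Nonempty S] [DecidableEq S]
    (P : Matrix S S ℝ) (hP_nonneg : ∀ s s', 0 ≤ P s s')
    (hP_row : ∀ s, ∑ s', P s s' = 1)
    (β : ℝ) (hβ0 : 0 ≤ β) (hβ1 : β < 1) (C : S → ℝ) :
    (((1 : Matrix S S ℝ) - β • P)⁻¹ *ᵥ C)
        = C + β • (P *ᵥ (((1 : Matrix S S ℝ) - β • P)⁻¹ *ᵥ C)) ∧
    (∀ W : S → ℝ, W = C + β • (P *ᵥ W) → W = ((1 : Matrix S S ℝ) - β • P)⁻¹ *ᵥ C) ∧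
    (∀ s : S, HasSum (fun t : ℕ => β ^ t * ((P ^ t) *ᵥ C) s)
        ((((1 : Matrix S S ℝ) - β • P)⁻¹ *ᵥ C) s)) := by
  obtain ⟨hunit, hsum⟩ := isUnit_one_sub_smul_and_hasSum_pow P hP_nonneg hP_row hβ0 hβ1
  have hdet := (Matrix.isUnit_iff_isUnit_det _).mp hunit
  have hsub (W : S → ℝ) : (1 - β • P) *ᵥ W = W - β • (P *ᵥ W) := by
    rw [sub_mulVec, one_mulVec, smul_mulVec]
  refine ⟨?_, fun W hW => ?_, fun s => ?_⟩
  · rw [← sub_eq_iff_eq_add, ← hsub, mulVec_mulVec, mul_nonsing_inv _ hdet, one_mulVec]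
  · have hC : (1 - β • P) *ᵥ W = C := by rw [hsub, sub_eq_iff_eq_add, ← hW]
    rw [← hC, mulVec_mulVec, nonsing_inv_mul _ hdet, one_mulVec]
  · let f : Matrix S S ℝ →+ ℝ :=
      { toFun := fun M => (M *ᵥ C) s
        map_zero' := by simp
        map_add' := fun M N => by simp [add_mulVec] }
    have hf : Continuous f :=
      (continuous_apply s).comp (continuous_id.matrix_mulVec continuous_const)
    simpa [f, Function.comp_def, smul_pow, smul_mulVec] using hsum.map f hf
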